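/- There exist a division ring F, a division subring G of F, and elements f_0 = 1, f_1, f_2, f_3 forming a left G-basis of F, such that every x ∈ F can be written x = a + f_1·b with a, b ∈ G, and for each k ∈ {1, 2} there exists e ∈ D_k with e ∉ S_k such that every d ∈ D_k can be written d = s + e·t with s, t ∈ S_k. (This corresponds to a division ring extension G ⊆ F for which the (G,F)-bimodule F has right dimension sequence (1,2,2,2,1,4); the associated triangular matrix ring is a hereditary artinian ring of Coxeter type I₂(6).) -/

import Mathlib

/-- The data of a division ring `F`, a division subring `G`, and a sequence
`(f_i)_{i∈ℕ}` of elements of `F` with `f_0 = 1`. -/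
structure DivExtData : Type 1 where
  F : Type
  [instF : DivisionRing F]
  G : Subring F
  hG : ∀ x ∈ G, x⁻¹ ∈ G
  f : ℕ → F
  hf0 : f 0 = 1

attribute [instance] DivExtData.instF

/-- `L_k`: the left `G`-subspace of `F` spanned by `f_0, …, f_k`. -/
def Lset {F : Type*} [DivisionRing F] (G : Subring F) (f : ℕ → F) (k : ℕ) : Set F :=
  {x | ∃ c : ℕ → F, (∀ i, c i ∈ G) ∧ x = ∑ i ∈ Finset.range (k + 1), c i * f i}

/-- `S_k = {a ∈ F : L_k · a ⊆ L_k}`. -/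
def Sset {F : Type*} [DivisionRing F] (G : Subring F) (f : ℕ → F) (k : ℕ) : Set F :=
  {a | ∀ x ∈ Lset G f k, x * a ∈ Lset G f k}

/-- `D_0 = F`, and `D_k = {a ∈ F : L_{k-1} · a ⊆ L_k}` for `k ≥ 1`. -/
def Dset {F : Type*} [DivisionRing F] (G : Subring F) (f : ℕ → F) : ℕ → Set F
  | 0 => Set.univ
  | k + 1 => {a | ∀ x ∈ Lset G f k, x * a ∈ Lset G f (k + 1)}

/-!
A division ring `F` with an automorphism `σ` of order `n` and an element `e` whose powers
`1, …, e ^ (n - 1)` form a left basis over the fixed subring of `σ` stays of this kind when it is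
replaced by the skew Laurent series ring `F((X; σ))`, with the automorphism `X ↦ ζ X` for a
primitive `n`-th root of unity `ζ`, conjugated by `1 - X`. Keeping `e`, one only has to multiply the
basis dual to its powers under the trace by a suitable series. The new fixed subring contains
`(1 - X) F (1 - X)⁻¹`, so it is large enough to write every `x ∈ F` as `a + e b` with `a` and `b`
fixed, and to divide the elements of `D_k ∩ F` by `e` with quotient and remainder in `S_k`.
Iterating from the Laurent series in `e` over `ℂ`, the union of the resulting tower has these
properties for all of its elements.
-/

section GradedLaurentSeries

variable {K R : Type*} [CommRing K] [Ring R] [Algebra K R] (A : ℤ → Submodule K R)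
  [SetLike.GradedMonoid A]

/-- The algebra of Laurent series over a `ℤ`-graded algebra whose `n`-th coefficient is homogeneous
of degree `n`, for every `n`. -/
def gradedLaurentSeries : Subalgebra K (LaurentSeries R) where
  carrier := {s | ∀ n, s.coeff n ∈ A n}
  mul_mem' {s t} hs ht n := by
    rw [HahnSeries.coeff_mul]
    refine sum_mem fun ij hij ↦ ?_
    rw [← (Finset.mem_antidiagonal.1 hij).2.2]
    exact SetLike.mul_mem_graded (hs _) (ht _)
  add_mem' hs ht n := add_mem (hs n) (ht n)
  algebraMap_mem' r n := by
    rw [HahnSeries.algebraMap_apply, HahnSeries.C_apply, HahnSeries.coeff_single]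
    split_ifs with h
    · exact h ▸ SetLike.algebraMap_mem_graded A r
    · exact zero_mem _

namespace gradedLaurentSeries

variable {A}

theorem ext {s t : gradedLaurentSeries A} (h : ∀ n, s.1.coeff n = t.1.coeff n) : s = t :=
  Subtype.ext (HahnSeries.ext (funext h))

/-- The Laurent series with the single homogeneous coefficient `a` in degree `n`. -/
noncomputable def single (n : ℤ) : A n →ₗ[K] gradedLaurentSeries A where
  toFun a := ⟨HahnSeries.single n a.1, fun m ↦ by
    rw [HahnSeries.coeff_single]
    split_ifs with h
    · exact h ▸ a.2
    · exact zero_mem _⟩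
  map_add' a b := Subtype.ext (HahnSeries.single_add n a.1 b.1)
  map_smul' r a := Subtype.ext (map_smul (HahnSeries.single.linearMap n) r a.1)

theorem coe_single (n : ℤ) (a : A n) : (single n a : LaurentSeries R) = HahnSeries.single n a.1 :=
  rfl

theorem isUnit_single {n : ℤ} {a b : R} (ha : a ∈ A n) (hb : b ∈ A (-n)) (hab : a * b = 1)
    (hba : b * a = 1) : IsUnit (single n ⟨a, ha⟩) := by
  refine ⟨⟨single n ⟨a, ha⟩, single (-n) ⟨b, hb⟩, ?_, ?_⟩, rfl⟩ <;>
    simp [coe_single, Subtype.ext_iff, HahnSeries.single_mul_single, hab, hba]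

theorem coeff_invOfUnit_mem {p : PowerSeries R} (hp : ∀ n : ℕ, p.coeff n ∈ A n) (n : ℕ) :
    (p.invOfUnit 1).coeff n ∈ A n := by
  induction n using Nat.strong_induction_on with
  | _ n ih =>
    rw [PowerSeries.coeff_invOfUnit]
    split_ifs with h
    · simpa [h] using SetLike.one_mem_graded A
    · rw [inv_one, Units.val_one, neg_one_mul]
      refine neg_mem (sum_mem fun ij hij ↦ ?_)
      split_ifs with hlt
      · rw [← Finset.HasAntidiagonal.mem_antidiagonal.1 hij, Nat.cast_add]
        exact SetLike.mul_mem_graded (hp _) (ih _ hlt)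
      · exact zero_mem _

theorem coeff_ofPowerSeries_mem {p : PowerSeries R} (hp : ∀ n : ℕ, p.coeff n ∈ A n) :
    HahnSeries.ofPowerSeries ℤ R p ∈ gradedLaurentSeries A := by
  intro n
  rw [PowerSeries.coeff_coe]
  split_ifs with h
  · exact zero_mem _
  · lift n to ℕ using not_lt.1 h
    exact hp n

theorem isUnit_of_constantCoeff_eq_one {p : PowerSeries R} (hp : ∀ n : ℕ, p.coeff n ∈ A n)
    (h1 : p.constantCoeff = 1) :
    IsUnit (⟨_, coeff_ofPowerSeries_mem hp⟩ : gradedLaurentSeries A) := by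
  refine ⟨⟨⟨_, coeff_ofPowerSeries_mem hp⟩,
    ⟨_, coeff_ofPowerSeries_mem (coeff_invOfUnit_mem hp)⟩, ?_, ?_⟩, rfl⟩
  · exact Subtype.ext (by simp [← map_mul, PowerSeries.mul_invOfUnit p 1 h1])
  · exact Subtype.ext (by simp [← map_mul, PowerSeries.invOfUnit_mul p 1 h1])

theorem isUnit_of_coeff_zero_eq_one {x : gradedLaurentSeries A}
    (hneg : ∀ k < 0, x.1.coeff k = 0) (hone : x.1.coeff 0 = 1) : IsUnit x := by
  let p : PowerSeries R := .mk fun k ↦ x.1.coeff k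
  have hp (k : ℕ) : p.coeff k ∈ A k := by
    rw [PowerSeries.coeff_mk]
    exact x.2 k
  have hx : x = ⟨_, coeff_ofPowerSeries_mem hp⟩ := ext fun k ↦ by
    dsimp only
    rw [PowerSeries.coeff_coe]
    split_ifs with hk
    · exact hneg k hk
    · rw [PowerSeries.coeff_mk, Int.natAbs_of_nonneg (not_lt.1 hk)]
  rw [hx]
  refine isUnit_of_constantCoeff_eq_one hp ?_
  rw [← PowerSeries.coeff_zero_eq_constantCoeff_apply, PowerSeries.coeff_mk, Nat.cast_zero, hone]

theorem isUnit_of_ne_zero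
    (hA : ∀ n, ∀ a ∈ A n, a ≠ 0 → ∃ b ∈ A (-n), a * b = 1 ∧ b * a = 1)
    {x : gradedLaurentSeries A} (hx : x ≠ 0) : IsUnit x := by
  set n := x.1.order
  have hlead : x.1.coeff n ≠ 0 := HahnSeries.coeff_order_eq_zero.not.2 (by simpa using hx)
  obtain ⟨b, hb, hab, hba⟩ := hA n _ (x.2 n) hlead
  have hs : IsUnit (single (-n) ⟨b, hb⟩) := isUnit_single hb (by simpa using x.2 n) hba hab
  have hcoeff (k : ℤ) : (single (-n) ⟨b, hb⟩ * x).1.coeff k = b * x.1.coeff (n + k) := by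
    change (HahnSeries.single (-n) b * x.1).coeff k = _
    rw [HahnSeries.coeff_single_mul, sub_neg_eq_add, add_comm]
  have hmul : IsUnit (single (-n) ⟨b, hb⟩ * x) :=
    isUnit_of_coeff_zero_eq_one
      (fun k hk ↦ by rw [hcoeff, HahnSeries.coeff_eq_zero_of_lt_order (by omega), mul_zero])
      (by rw [hcoeff, add_zero, hba])
  exact (hs.unit.isUnit_units_mul x).1 hmul

/-- Substitution in graded Laurent series: the unit `u` scales the variable by `u`. -/
def scale : Kˣ →* (gradedLaurentSeries A →ₐ[K] gradedLaurentSeries A) where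
  toFun u :=
    { toFun s := ⟨⟨fun n ↦ u ^ n • s.1.coeff n,
          s.1.isPWO_support.mono fun n hn h0 ↦ hn (by simp [h0])⟩,
        fun n ↦ (A n).smul_mem ((u ^ n : Kˣ) : K) (s.2 n)⟩
      map_one' := ext fun n ↦ by
        by_cases hn : n = 0 <;> simp [hn, HahnSeries.coeff_one]
      map_mul' s t := ext fun n ↦ by
        simp only [MulMemClass.coe_mul, HahnSeries.coeff_mul, Finset.smul_sum]
        refine Finset.sum_congr (by ext; simp [smul_eq_zero_iff_eq]) fun ij hij ↦ ?_
        rw [smul_mul_smul_comm, ← zpow_add, (Finset.mem_antidiagonal.1 hij).2.2]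
      map_zero' := ext fun n ↦ smul_zero _
      map_add' s t := ext fun n ↦ smul_add _ _ _
      commutes' r := ext fun n ↦ by
        by_cases hn : n = 0 <;> simp [hn, HahnSeries.algebraMap_apply] }
  map_one' := AlgHom.ext fun s ↦ ext fun n ↦ by simp
  map_mul' u v := AlgHom.ext fun s ↦ ext fun n ↦ by simp [mul_zpow, mul_smul]

theorem scale_single (u : Kˣ) (n : ℤ) (a : A n) : scale u (single n a) = u ^ n • single n a :=
  ext fun m ↦ by by_cases hm : m = n <;> simp [scale, coe_single, hm]

end gradedLaurentSeries
end GradedLaurentSeries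

section SkewLaurentSeries

variable {K F : Type*} [Field K] [DivisionRing F] [Algebra K F] (σ : F ≃ₐ[K] F)

/-- The `K`-linear endomorphisms `x ↦ a * σ ^ n x` of `F`: the homogeneous component of degree `n`
of the skew Laurent series ring of `σ`. -/
def skewComponent (n : ℤ) : Submodule K (Module.End K F) where
  carrier := {φ | ∃ a, ∀ x, φ x = a * (σ ^ n) x}
  zero_mem' := ⟨0, by simp⟩
  add_mem' := by
    rintro φ ψ ⟨a, ha⟩ ⟨b, hb⟩
    exact ⟨a + b, fun x ↦ by rw [LinearMap.add_apply, ha, hb, add_mul]⟩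
  smul_mem' := by
    rintro r φ ⟨a, ha⟩
    exact ⟨r • a, fun x ↦ by rw [LinearMap.smul_apply, ha, smul_mul_assoc]⟩

instance : SetLike.GradedMonoid (skewComponent σ) where
  one_mem := ⟨1, by simp⟩
  mul_mem := by
    rintro i j φ ψ ⟨a, ha⟩ ⟨b, hb⟩
    refine ⟨a * (σ ^ i) b, fun x ↦ ?_⟩
    rw [Module.End.mul_apply, ha, hb, map_mul, zpow_add, AlgEquiv.mul_apply, mul_assoc]

theorem exists_inv_mem_skewComponent {n : ℤ} {φ : Module.End K F} (hφ : φ ∈ skewComponent σ n)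
    (h0 : φ ≠ 0) : ∃ ψ ∈ skewComponent σ (-n), φ * ψ = 1 ∧ ψ * φ = 1 := by
  obtain ⟨a, ha⟩ := hφ
  have ha0 : a ≠ 0 := by
    rintro rfl
    exact h0 (LinearMap.ext fun x ↦ by simp [ha])
  refine ⟨(σ ^ (-n)).toLinearMap * Algebra.lmul K F a⁻¹,
    ⟨(σ ^ (-n)) a⁻¹, fun x ↦ ?_⟩, LinearMap.ext fun x ↦ ?_, LinearMap.ext fun x ↦ ?_⟩
  · simp
  · simp [ha, ha0]
  · simp [ha, ha0]

/-- The division ring of skew Laurent series `∑ n, aₙ Xⁿ` over `F`, with `X * a = σ a * X`. The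
monomial `a Xⁿ` is encoded as the endomorphism `x ↦ a * σ ^ n x` of `F` placed in degree `n`. -/
def SkewLaurentSeries : Type _ := gradedLaurentSeries (skewComponent σ)

namespace SkewLaurentSeries

noncomputable instance : Ring (SkewLaurentSeries σ) :=
  inferInstanceAs (Ring (gradedLaurentSeries (skewComponent σ)))

noncomputable instance : Algebra K (SkewLaurentSeries σ) :=
  inferInstanceAs (Algebra K (gradedLaurentSeries (skewComponent σ)))

instance : Nontrivial (SkewLaurentSeries σ) :=
  inferInstanceAs (Nontrivial (gradedLaurentSeries (skewComponent σ)))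

noncomputable instance : DivisionRing (SkewLaurentSeries σ) :=
  .ofIsUnitOrEqZero fun _ ↦ or_iff_not_imp_right.2 fun hx ↦
    gradedLaurentSeries.isUnit_of_ne_zero (A := skewComponent σ)
      (fun _ _ ↦ exists_inv_mem_skewComponent σ) hx

/-- Constant skew Laurent series. -/
noncomputable def C : F →ₐ[K] SkewLaurentSeries σ :=
  AlgHom.codRestrict
    ({ toRingHom := HahnSeries.C.comp (Algebra.lmul K F).toRingHom
       commutes' r :=
        congrArg HahnSeries.C ((Algebra.lmul K F).commutes r) } : F →ₐ[K] LaurentSeries _)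
    (gradedLaurentSeries (skewComponent σ))
    fun a ↦ (gradedLaurentSeries.single (A := skewComponent σ) 0
      ⟨Algebra.lmul K F a, a, by simp⟩).2

/-- The variable of the skew Laurent series ring. -/
noncomputable def X : SkewLaurentSeries σ :=
  gradedLaurentSeries.single 1 ⟨σ.toLinearMap, 1, by simp⟩

theorem X_ne_zero : X σ ≠ 0 := fun h ↦ by
  have h1 : σ.toLinearMap = 0 := HahnSeries.single_eq_zero_iff.1 (congrArg Subtype.val h)
  simpa using LinearMap.congr_fun h1 1

theorem X_mul_C (a : F) : X σ * C σ a = C σ (σ a) * X σ := Subtype.ext <| by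
  change HahnSeries.single 1 _ * HahnSeries.single 0 _ =
    HahnSeries.single 0 _ * HahnSeries.single 1 _
  rw [HahnSeries.single_mul_single, HahnSeries.single_mul_single, add_zero, zero_add]
  exact congrArg (HahnSeries.single 1) (LinearMap.ext fun x ↦ by simp)

/-- The automorphism of the skew Laurent series ring scaling the variable by the unit `u`. -/
noncomputable def scale : Kˣ →* (SkewLaurentSeries σ ≃ₐ[K] SkewLaurentSeries σ) :=
  (AlgEquiv.algHomUnitsEquiv K (SkewLaurentSeries σ)).toMonoidHom.comp
    gradedLaurentSeries.scale.toHomUnits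

variable {σ}

theorem scale_C (u : Kˣ) (a : F) : scale σ u (C σ a) = C σ a :=
  (gradedLaurentSeries.scale_single (A := skewComponent σ) u 0
    ⟨Algebra.lmul K F a, a, by simp⟩).trans (by rw [zpow_zero, one_smul]; rfl)

theorem scale_X (u : Kˣ) : scale σ u (X σ) = u • X σ :=
  (gradedLaurentSeries.scale_single u 1 _).trans (by rw [zpow_one]; rfl)

theorem scale_X_zpow (u : Kˣ) (k : ℤ) : scale σ u (X σ ^ k) = (u : K) ^ k • X σ ^ k := by
  rw [map_zpow₀, scale_X, Units.smul_def, Algebra.smul_def,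
    (Algebra.commute_algebraMap_left _ _).mul_zpow, ← map_zpow₀, ← Algebra.smul_def]

theorem X_zpow_mul_C (k : ℤ) (a : F) : X σ ^ k * C σ a = C σ ((σ ^ k) a) * X σ ^ k := by
  have hX := X_ne_zero σ
  induction k using Int.induction_on generalizing a with
  | zero => simp
  | succ k ih =>
    rw [zpow_add_one₀ hX, zpow_add_one, mul_assoc, X_mul_C, ← mul_assoc, ih, mul_assoc,
      AlgEquiv.mul_apply]
  | pred k ih =>
    have hinv : (X σ)⁻¹ * C σ a = C σ (σ⁻¹ a) * (X σ)⁻¹ := by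
      rw [inv_mul_eq_iff_eq_mul₀ hX, ← mul_assoc, X_mul_C, ← AlgEquiv.mul_apply, mul_inv_cancel,
        AlgEquiv.one_apply, mul_inv_cancel_right₀ hX]
    rw [zpow_sub_one₀ hX, zpow_sub_one, mul_assoc, hinv, ← mul_assoc, ih, mul_assoc,
      AlgEquiv.mul_apply]

end SkewLaurentSeries
end SkewLaurentSeries

section CyclicTrace

variable {K F : Type*} [Field K] [DivisionRing F] [Algebra K F]

/-- The subring of elements fixed by `σ`. -/
def fixedSubring (σ : F ≃ₐ[K] F) : Subring F :=
  RingHom.eqLocus (σ : F →+* F) (.id F)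

/-- The sum of the first `n` iterates of `σ`, which is the trace to the fixed subring if
`σ ^ n = 1`. -/
def cyclicTrace (σ : F ≃ₐ[K] F) (n : ℕ) : F →ₗ[K] F :=
  ∑ i ∈ Finset.range n, (σ ^ i).toLinearMap

variable {σ : F ≃ₐ[K] F} {n : ℕ}

theorem mem_fixedSubring {x : F} : x ∈ fixedSubring σ ↔ σ x = x :=
  Iff.rfl

theorem inv_mem_fixedSubring {x : F} (hx : x ∈ fixedSubring σ) : x⁻¹ ∈ fixedSubring σ := by
  rw [mem_fixedSubring, map_inv₀, mem_fixedSubring.1 hx]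

theorem pow_apply_of_mem_fixedSubring {x : F} (hx : x ∈ fixedSubring σ) (i : ℕ) :
    (σ ^ i) x = x := by
  induction i with
  | zero => rfl
  | succ i ih => rw [pow_succ, AlgEquiv.mul_apply, mem_fixedSubring.1 hx, ih]

theorem map_mem_fixedSubring_conj (κ : F ≃ₐ[K] F) {x : F} (hx : x ∈ fixedSubring σ) :
    κ x ∈ fixedSubring (κ * σ * κ⁻¹) := by
  rw [mem_fixedSubring, AlgEquiv.mul_apply, AlgEquiv.mul_apply, ← AlgEquiv.mul_apply κ⁻¹ κ,
    inv_mul_cancel, AlgEquiv.one_apply, mem_fixedSubring.1 hx]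

theorem cyclicTrace_apply (x : F) : cyclicTrace σ n x = ∑ i ∈ Finset.range n, (σ ^ i) x := by
  simp [cyclicTrace]

theorem cyclicTrace_mem_fixedSubring (hσ : σ ^ n = 1) (x : F) :
    cyclicTrace σ n x ∈ fixedSubring σ := by
  simp_rw [mem_fixedSubring, cyclicTrace_apply, map_sum, ← AlgEquiv.mul_apply, ← pow_succ']
  rw [← add_left_inj ((σ ^ 0) x), ← Finset.sum_range_succ' (fun i ↦ (σ ^ i) x),
    Finset.sum_range_succ, hσ, pow_zero]

theorem cyclicTrace_mul_left {g : F} (hg : g ∈ fixedSubring σ) (x : F) :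
    cyclicTrace σ n (g * x) = g * cyclicTrace σ n x := by
  simp_rw [cyclicTrace_apply, map_mul, pow_apply_of_mem_fixedSubring hg, Finset.mul_sum]

theorem cyclicTrace_mul_right {g : F} (hg : g ∈ fixedSubring σ) (x : F) :
    cyclicTrace σ n (x * g) = cyclicTrace σ n x * g := by
  simp_rw [cyclicTrace_apply, map_mul, pow_apply_of_mem_fixedSubring hg, Finset.sum_mul]

theorem cyclicTrace_conj (κ : F ≃ₐ[K] F) (x : F) :
    cyclicTrace (κ * σ * κ⁻¹) n x = κ (cyclicTrace σ n (κ⁻¹ x)) := by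
  simp_rw [cyclicTrace_apply, conj_pow, AlgEquiv.mul_apply, map_sum]

theorem cyclicTrace_of_apply_eq_smul {v : F} {μ : K} (hv : σ v = μ • v) :
    cyclicTrace σ n v = (∑ i ∈ Finset.range n, μ ^ i) • v := by
  have hpow (i : ℕ) : (σ ^ i) v = μ ^ i • v := by
    induction i with
    | zero => simp
    | succ i ih => rw [pow_succ, AlgEquiv.mul_apply, hv, map_smul, ih, smul_smul, pow_succ']
  simp_rw [cyclicTrace_apply, hpow, Finset.sum_smul]

theorem cyclicTrace_scale_X_zpow {ζ : Kˣ} (hζ : IsPrimitiveRoot ζ n) {k : ℤ} (hk : |k| < n) :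
    cyclicTrace (SkewLaurentSeries.scale σ ζ) n (SkewLaurentSeries.X σ ^ k) =
      if k = 0 then (n : SkewLaurentSeries σ) else 0 := by
  rw [cyclicTrace_of_apply_eq_smul (SkewLaurentSeries.scale_X_zpow ζ k)]
  split_ifs with h0
  · simp [h0, Algebra.smul_def]
  · have hne : (ζ : K) ^ k ≠ 1 := fun h ↦
      h0 (Int.eq_zero_of_abs_lt_dvd
        ((hζ.zpow_eq_one_iff_dvd k).1 (Units.ext (by simpa using h))) hk)
    have hone : ((ζ : K) ^ k) ^ n = 1 := by
      rw [← zpow_natCast, zpow_comm, zpow_natCast, ← Units.val_pow_eq_pow_val, hζ.pow_eq_one,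
        Units.val_one, one_zpow]
    rw [geom_sum_eq hne, hone, sub_self, zero_div, zero_smul]

end CyclicTrace

section LeftSpan

variable {F : Type*} [DivisionRing F] {G : Subring F}

/-- `L_k` as a left `G`-subspace of `F`. -/
def leftSpan (G : Subring F) (f : ℕ → F) (k : ℕ) : Submodule G F where
  carrier := Lset G f k
  zero_mem' := ⟨0, fun _ ↦ zero_mem G, by simp⟩
  add_mem' := by
    rintro _ _ ⟨c, hc, rfl⟩ ⟨d, hd, rfl⟩
    exact ⟨c + d, fun i ↦ add_mem (hc i) (hd i), by simp [add_mul, Finset.sum_add_distrib]⟩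
  smul_mem' := by
    rintro g _ ⟨c, hc, rfl⟩
    exact ⟨fun i ↦ g * c i, fun i ↦ mul_mem g.2 (hc i), by
      simp [Subring.smul_def, Finset.mul_sum, mul_assoc]⟩

theorem mul_mem_leftSpan {f : ℕ → F} {k : ℕ} {g x : F} (hg : g ∈ G) (hx : x ∈ leftSpan G f k) :
    g * x ∈ leftSpan G f k :=
  (leftSpan G f k).smul_mem ⟨g, hg⟩ hx

theorem apply_mem_leftSpan (f : ℕ → F) {i k : ℕ} (hi : i ≤ k) : f i ∈ leftSpan G f k := by
  refine ⟨fun l ↦ if l = i then 1 else 0, fun l ↦ ?_, ?_⟩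
  · dsimp only
    split_ifs
    exacts [one_mem G, zero_mem G]
  · simp [Nat.lt_succ_of_le hi]

theorem forall_mul_mem_leftSpan_iff {f : ℕ → F} {k l : ℕ} {a : F} :
    (∀ x ∈ leftSpan G f k, x * a ∈ leftSpan G f l) ↔ ∀ i ≤ k, f i * a ∈ leftSpan G f l := by
  refine ⟨fun h i hi ↦ h _ (apply_mem_leftSpan f hi), ?_⟩
  rintro h _ ⟨c, hc, rfl⟩
  rw [Finset.sum_mul]
  refine sum_mem fun i hi ↦ ?_
  rw [mul_assoc]
  exact mul_mem_leftSpan (hc i) (h i (Finset.mem_range_succ_iff.1 hi))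

theorem mem_Sset_iff {f : ℕ → F} {k : ℕ} {a : F} :
    a ∈ Sset G f k ↔ ∀ i ≤ k, f i * a ∈ leftSpan G f k :=
  forall_mul_mem_leftSpan_iff

theorem mem_Dset_succ_iff {f : ℕ → F} {k : ℕ} {a : F} :
    a ∈ Dset G f (k + 1) ↔ ∀ i ≤ k, f i * a ∈ leftSpan G f (k + 1) :=
  forall_mul_mem_leftSpan_iff

theorem mem_Dset_pow_succ (e : F) (k : ℕ) : e ∈ Dset G (e ^ ·) (k + 1) :=
  mem_Dset_succ_iff.2 fun i hi ↦ by
    rw [← pow_succ]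
    exact apply_mem_leftSpan (e ^ ·) (Nat.succ_le_succ hi)

theorem map_mem_leftSpan {F' : Type*} [DivisionRing F'] {G' : Subring F'} (j : F →+* F')
    (hj : G.map j ≤ G') {e : F} {k : ℕ} {x : F} (hx : x ∈ leftSpan G (e ^ ·) k) :
    j x ∈ leftSpan G' (j e ^ ·) k := by
  obtain ⟨c, hc, rfl⟩ := hx
  exact ⟨fun i ↦ j (c i), fun i ↦ hj ⟨c i, hc i, rfl⟩, by simp⟩

/-- `t` is a quotient of `d` by `e` on the left, in the sense that `t` and the remainder
`d - e * t` stabilize the left span of `1, e, …, e ^ k`. The second condition accounts only for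
the product of `e ^ k` with the remainder, the other products being automatic for `d ∈ D_k`. -/
structure IsLeftQuotient (G : Subring F) (e : F) (k : ℕ) (d t : F) : Prop where
  pow_mul_mem : ∀ i ≤ k, e ^ i * t ∈ leftSpan G (e ^ ·) k
  pow_succ_mul_sub_mem : e ^ (k + 1) * t - e ^ k * d ∈ leftSpan G (e ^ ·) k

theorem IsLeftQuotient.map {F' : Type*} [DivisionRing F'] {G' : Subring F'} (j : F →+* F')
    (hj : G.map j ≤ G') {e : F} {k : ℕ} {d t : F} (h : IsLeftQuotient G e k d t) :
    IsLeftQuotient G' (j e) k (j d) (j t) where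
  pow_mul_mem i hi := by simpa using map_mem_leftSpan j hj (h.pow_mul_mem i hi)
  pow_succ_mul_sub_mem := by simpa using map_mem_leftSpan j hj h.pow_succ_mul_sub_mem

theorem IsLeftQuotient.exists_eq_add_mul {e : F} {k : ℕ} {d t : F}
    (h : IsLeftQuotient G e (k + 1) d t) (hd : d ∈ Dset G (e ^ ·) (k + 1)) :
    ∃ s ∈ Sset G (e ^ ·) (k + 1), ∃ t ∈ Sset G (e ^ ·) (k + 1), d = s + e * t := by
  refine ⟨d - e * t, mem_Sset_iff.2 fun i hi ↦ ?_, t, mem_Sset_iff.2 h.pow_mul_mem, by simp⟩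
  rw [mul_sub, ← mul_assoc, ← pow_succ]
  obtain hi | rfl := Nat.le_succ_iff.1 hi
  · exact sub_mem (mem_Dset_succ_iff.1 hd i hi) (h.pow_mul_mem _ (Nat.succ_le_succ hi))
  · rw [← neg_mem_iff, neg_sub]
    exact h.pow_succ_mul_sub_mem

end LeftSpan

section CyclicStage

/-- A division algebra `F` over `K` with an automorphism `σ` satisfying `σ ^ n = 1`, an element
`gen` whose powers `1, gen, …, gen ^ (n - 1)` form a left basis of `F` over the fixed subring of
`σ`, and the dual basis `dual 0, …, dual (n - 1)` with respect to the trace. -/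
structure CyclicStage (K : Type*) [Field K] (n : ℕ) where
  F : Type*
  [divisionRing : DivisionRing F]
  [algebra : Algebra K F]
  σ : F ≃ₐ[K] F
  gen : F
  dual : ℕ → F
  pow_eq_one : σ ^ n = 1
  cyclicTrace_pow_mul_dual : ∀ i < n, ∀ l < n,
    cyclicTrace σ n (gen ^ i * dual l) = if i = l then 1 else 0

namespace CyclicStage

attribute [instance] divisionRing algebra

variable {K : Type*} [Field K] {n : ℕ} (s : CyclicStage K n)

/-- The `l`-th coordinate with respect to the powers of `gen`. -/
def coord (l : ℕ) : s.F →ₗ[K] s.F :=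
  cyclicTrace s.σ n ∘ₗ LinearMap.mulRight K (s.dual l)

theorem coord_apply (l : ℕ) (x : s.F) : s.coord l x = cyclicTrace s.σ n (x * s.dual l) :=
  rfl

theorem coord_mem (l : ℕ) (x : s.F) : s.coord l x ∈ fixedSubring s.σ :=
  cyclicTrace_mem_fixedSubring s.pow_eq_one _

theorem coord_mul_left {g : s.F} (hg : g ∈ fixedSubring s.σ) (l : ℕ) (x : s.F) :
    s.coord l (g * x) = g * s.coord l x := by
  rw [coord_apply, mul_assoc, cyclicTrace_mul_left hg, coord_apply]

theorem coord_pow {i l : ℕ} (hi : i < n) (hl : l < n) :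
    s.coord l (s.gen ^ i) = if i = l then 1 else 0 :=
  s.cyclicTrace_pow_mul_dual i hi l hl

theorem coord_sum {c : ℕ → s.F} (hc : ∀ i, c i ∈ fixedSubring s.σ) {l : ℕ} (hl : l < n) :
    s.coord l (∑ i ∈ Finset.range n, c i * s.gen ^ i) = c l := by
  rw [map_sum, Finset.sum_eq_single_of_mem l (Finset.mem_range.2 hl) fun i hi hil ↦ ?_]
  · simp [s.coord_mul_left (hc l), s.coord_pow hl hl]
  · simp [s.coord_mul_left (hc i), s.coord_pow (Finset.mem_range.1 hi) hl, hil]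

theorem dual_ne_zero {l : ℕ} (hl : l < n) : s.dual l ≠ 0 := fun h ↦ by
  simpa [h] using s.cyclicTrace_pow_mul_dual l hl l hl

theorem σ_gen_ne (hn : 2 ≤ n) : s.σ s.gen ≠ s.gen := fun h ↦ by
  have h1 := s.coord_mul_left (mem_fixedSubring.2 h) 1 1
  have hgen : s.coord 1 s.gen = 1 := by simpa using s.coord_pow (i := 1) (l := 1) hn hn
  have hone : s.coord 1 1 = 0 := by simpa using s.coord_pow (i := 0) (l := 1) (by omega) hn
  simp [hgen, hone] at h1

theorem cyclicTrace_pow_mul_dual_mul {g : s.F} (hg : g ∈ fixedSubring s.σ) {i l : ℕ} (hi : i < n)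
    (hl : l < n) : cyclicTrace s.σ n (s.gen ^ i * (s.dual l * g)) = if i = l then g else 0 := by
  rw [← mul_assoc, cyclicTrace_mul_right hg, s.cyclicTrace_pow_mul_dual i hi l hl, ite_mul,
    one_mul, zero_mul]

theorem coord_mul (l : ℕ) (x t : s.F) :
    s.coord l (x * t) = cyclicTrace s.σ n (x * (t * s.dual l)) := by
  rw [coord_apply, mul_assoc]

theorem σ_inv_dual_mul_dual_ne {i l : ℕ} (hi : i < n) (hl : l < n) (hil : i ≠ l) :
    s.σ ((s.dual i)⁻¹ * s.dual l) ≠ (s.dual i)⁻¹ * s.dual l := fun h ↦ by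
  have hzero := s.cyclicTrace_pow_mul_dual_mul (mem_fixedSubring.2 h) hl hi
  rw [mul_inv_cancel_left₀ (s.dual_ne_zero hi), s.cyclicTrace_pow_mul_dual l hl l hl, if_pos rfl,
    if_neg hil.symm] at hzero
  exact one_ne_zero hzero

variable [NeZero n]

-- The matrices `σ ^ j (gen ^ l)` and `σ ^ j (dual l)` are inverse to each other on one side by the
-- duality, hence also on the other side.
theorem sum_pow_dual_mul_pow {j : ℕ} (hj : j < n) :
    ∑ l ∈ Finset.range n, (s.σ ^ j) (s.dual l) * s.gen ^ l = if j = 0 then 1 else 0 := by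
  let M : Matrix (Fin n) (Fin n) s.F := .of fun i j ↦ (s.σ ^ (j : ℕ)) (s.gen ^ (i : ℕ))
  let N : Matrix (Fin n) (Fin n) s.F := .of fun j l ↦ (s.σ ^ (j : ℕ)) (s.dual l)
  have hMN : M * N = 1 := by
    ext i l
    have h := s.cyclicTrace_pow_mul_dual i i.2 l l.2
    simp_rw [cyclicTrace_apply, map_mul, ← Fin.sum_univ_eq_sum_range] at h
    simpa [M, N, Matrix.mul_apply, Matrix.one_apply, Fin.ext_iff] using h
  have hNM : N * M = 1 := mul_eq_one_comm.1 hMN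
  have h := congrFun₂ hNM ⟨j, hj⟩ 0
  rw [← Fin.sum_univ_eq_sum_range (fun l ↦ (s.σ ^ j) (s.dual l) * s.gen ^ l)]
  simpa [M, N, Matrix.mul_apply, Matrix.one_apply, Fin.ext_iff] using h

theorem sum_coord_mul_pow (x : s.F) :
    ∑ l ∈ Finset.range n, s.coord l x * s.gen ^ l = x := by
  simp_rw [coord_apply, cyclicTrace_apply, map_mul, Finset.sum_mul]
  rw [Finset.sum_comm]
  simp_rw [mul_assoc, ← Finset.mul_sum]
  rw [Finset.sum_congr rfl fun j hj ↦ by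
    rw [s.sum_pow_dual_mul_pow (Finset.mem_range.1 hj)]]
  simp [NeZero.pos n]

theorem mem_leftSpan_of_coord_eq_zero {k : ℕ} (hk : k < n) {x : s.F}
    (hx : ∀ l, k < l → l < n → s.coord l x = 0) :
    x ∈ leftSpan (fixedSubring s.σ) (s.gen ^ ·) k := by
  refine ⟨fun l ↦ s.coord l x, fun l ↦ s.coord_mem l x, ?_⟩
  conv_lhs => rw [← s.sum_coord_mul_pow x]
  refine (Finset.sum_subset (Finset.range_subset_range.2 hk) fun l hl hlk ↦ ?_).symm
  rw [hx l (by simpa using hlk) (Finset.mem_range.1 hl), zero_mul]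

theorem isLeftQuotient_of_coord {k : ℕ} (hk : k + 1 < n) {d t : s.F}
    (h : ∀ l, k < l → l < n → ∀ i ≤ k + 1,
      s.coord l (s.gen ^ i * t) = if i = k + 1 then s.coord l (s.gen ^ k * d) else 0) :
    IsLeftQuotient (fixedSubring s.σ) s.gen k d t where
  pow_mul_mem i hi := s.mem_leftSpan_of_coord_eq_zero (by omega) fun l hkl hl ↦ by
    rw [h l hkl hl i (by omega), if_neg (by omega)]
  pow_succ_mul_sub_mem := s.mem_leftSpan_of_coord_eq_zero (by omega) fun l hkl hl ↦ by
    rw [map_sub, h l hkl hl _ le_rfl, if_pos rfl, sub_self]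

theorem exists_isLeftQuotient {k : ℕ} (hk : n = k + 2) (d : s.F) :
    ∃ t, IsLeftQuotient (fixedSubring s.σ) s.gen k d t := by
  set v := s.dual (k + 1)
  have hv : v ≠ 0 := s.dual_ne_zero (by omega)
  refine ⟨v * s.coord (k + 1) (s.gen ^ k * d) * v⁻¹,
    s.isLeftQuotient_of_coord (by omega) fun l hkl hl i hi ↦ ?_⟩
  obtain rfl : l = k + 1 := by omega
  rw [coord_mul, inv_mul_cancel_right₀ hv,
    s.cyclicTrace_pow_mul_dual_mul (s.coord_mem _ _) (by omega) hl]

end CyclicStage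
end CyclicStage

namespace SkewLaurentSeries

variable {K F : Type*} [Field K] [DivisionRing F] [Algebra K F] (σ : F ≃ₐ[K] F)

theorem X_ne_one : X σ ≠ 1 := fun h ↦ by
  have h1 := congrArg (fun s : SkewLaurentSeries σ ↦ HahnSeries.coeff s.1 1) h
  have h2 : σ.toLinearMap = 0 := (HahnSeries.coeff_single_same 1 _).symm.trans
    (h1.trans (by change HahnSeries.coeff 1 1 = 0; simp [HahnSeries.coeff_one]))
  simpa using LinearMap.congr_fun h2 1

/-- Conjugation by `1 - X`. -/
noncomputable def conj : SkewLaurentSeries σ ≃ₐ[K] SkewLaurentSeries σ :=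
  MulSemiringAction.toAlgAut (ConjAct (SkewLaurentSeries σ)ˣ) K _
    (ConjAct.toConjAct (Units.mk0 (1 - X σ) (sub_ne_zero.2 (X_ne_one σ).symm)))

/-- The conjugate by `1 - X` of the automorphism scaling the variable by `ζ`. -/
noncomputable def twist (ζ : Kˣ) : SkewLaurentSeries σ ≃ₐ[K] SkewLaurentSeries σ :=
  conj σ * scale σ ζ * (conj σ)⁻¹

/-- The element `n⁻¹ X ^ (1 - n) (1 + X + ⋯ + X ^ (n - 1)) ^ 2`, chosen such that
`x ↦ C x * weight σ n` is compatible with the traces of `σ` and of `twist σ ζ`. -/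
noncomputable def weight (n : ℕ) : SkewLaurentSeries σ :=
  (n : K)⁻¹ • (X σ ^ (1 - n : ℤ) * (∑ i ∈ Finset.range n, X σ ^ i) ^ 2)

variable {σ} {n : ℕ} {ζ : Kˣ}

theorem one_sub_X_ne_zero : 1 - X σ ≠ 0 :=
  sub_ne_zero.2 (X_ne_one σ).symm

theorem conj_apply (x : SkewLaurentSeries σ) : conj σ x = (1 - X σ) * x * (1 - X σ)⁻¹ :=
  (ConjAct.units_smul_def _ x).trans (by simp)

theorem conj_mul_one_sub_X (x : SkewLaurentSeries σ) :
    conj σ x * (1 - X σ) = (1 - X σ) * x := by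
  rw [conj_apply, inv_mul_cancel_right₀ one_sub_X_ne_zero]

theorem one_sub_X_mul_conj_inv (x : SkewLaurentSeries σ) :
    (1 - X σ) * (conj σ)⁻¹ x = x * (1 - X σ) := by
  rw [← conj_mul_one_sub_X, ← AlgEquiv.mul_apply, mul_inv_cancel, AlgEquiv.one_apply]

theorem commute_X_C {g : F} (hg : g ∈ fixedSubring σ) : Commute (X σ) (C σ g) := by
  rw [Commute, SemiconjBy, X_mul_C, mem_fixedSubring.1 hg]

theorem conj_C_of_mem_fixedSubring {g : F} (hg : g ∈ fixedSubring σ) : conj σ (C σ g) = C σ g := by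
  rw [conj_apply, ((Commute.one_left _).sub_left (commute_X_C hg)).eq,
    mul_inv_cancel_right₀ one_sub_X_ne_zero]

theorem commute_weight_C {g : F} (hg : g ∈ fixedSubring σ) : Commute (weight σ n) (C σ g) :=
  (((commute_X_C hg).zpow_left₀ _).mul_left
    ((Commute.sum_left _ _ _ fun i _ ↦ (commute_X_C hg).pow_left i).pow_left 2)).smul_left _

theorem twist_pow_eq_one (hζ : ζ ^ n = 1) : twist σ ζ ^ n = 1 := by
  rw [twist, conj_pow, ← map_pow, hζ, map_one, mul_one, mul_inv_cancel]

theorem conj_C_mem_fixedSubring (a : F) : conj σ (C σ a) ∈ fixedSubring (twist σ ζ) :=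
  map_mem_fixedSubring_conj (conj σ) (scale_C ζ a)

theorem C_mem_fixedSubring {g : F} (hg : g ∈ fixedSubring σ) :
    C σ g ∈ fixedSubring (twist σ ζ) :=
  conj_C_of_mem_fixedSubring hg ▸ conj_C_mem_fixedSubring g

theorem exists_C_eq_conj_add_mul_conj {φ : F} (hφ : σ φ ≠ φ) (x : F) :
    ∃ a b, C σ x = conj σ (C σ a) + C σ φ * conj σ (C σ b) := by
  have hφ' := sub_ne_zero.2 hφ
  obtain ⟨b, hb⟩ := σ.surjective ((σ φ - φ)⁻¹ * (σ x - x))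
  have hx : σ (x - φ * b) = x - φ * σ b := by
    rw [map_sub, map_mul, sub_eq_sub_iff_sub_eq_sub, ← sub_mul, hb, mul_inv_cancel_left₀ hφ']
  refine ⟨x - φ * b, b, mul_right_cancel₀ one_sub_X_ne_zero (?_ : C σ x * (1 - X σ) = _)⟩
  rw [add_mul, mul_assoc, conj_mul_one_sub_X, conj_mul_one_sub_X, sub_mul, sub_mul, X_mul_C,
    X_mul_C, hx]
  simp only [map_sub, map_mul]
  noncomm_ring

theorem exists_C_eq_conj_inv_add_conj_inv_mul {φ : F} (hφ : σ φ ≠ φ) (x : F) :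
    ∃ a b, C σ x = (conj σ)⁻¹ (C σ a) + (conj σ)⁻¹ (C σ b) * C σ φ := by
  have hφ' := sub_ne_zero.2 hφ
  set b := (σ x - x) * (σ φ - φ)⁻¹ with hb
  have hx : σ x = x - b * φ + b * σ φ := by
    rw [sub_add, ← neg_sub (b * σ φ), ← mul_sub, hb, inv_mul_cancel_right₀ hφ', sub_neg_eq_add,
      add_sub_cancel]
  refine ⟨x - b * φ, b, mul_left_cancel₀ one_sub_X_ne_zero (?_ : (1 - X σ) * C σ x = _)⟩
  rw [mul_add, ← mul_assoc, one_sub_X_mul_conj_inv, one_sub_X_mul_conj_inv,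
    mul_assoc _ _ (C σ φ), sub_mul, sub_mul, X_mul_C, X_mul_C, hx]
  simp only [map_sub, map_mul, map_add]
  noncomm_ring

theorem commute_one_sub_X_pow_C (hσ : σ ^ n = 1) (a : F) : Commute (1 - X σ ^ n) (C σ a) :=
  (Commute.one_left _).sub_left <| by
    have h := X_zpow_mul_C (σ := σ) n a
    rwa [zpow_natCast, zpow_natCast, hσ, AlgEquiv.one_apply] at h

theorem one_sub_X_mul_weight_mul_one_sub_X :
    (1 - X σ) * weight σ n * (1 - X σ) = (n : K)⁻¹ • (X σ ^ (1 - n : ℤ) * (1 - X σ ^ n) ^ 2) := by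
  have hcomm : Commute (1 - X σ) (X σ ^ (1 - n : ℤ)) :=
    (((Commute.one_left _).sub_left (Commute.refl _)).zpow_right₀ _)
  rw [weight, mul_smul_comm, smul_mul_assoc, sq, ← mul_assoc, hcomm.eq, mul_assoc, mul_assoc,
    mul_assoc, geom_sum_mul_neg, ← mul_assoc (1 - X σ), mul_neg_geom_sum, sq]

theorem weight_mul_conj_C (hσ : σ ^ n = 1) (a : F) :
    weight σ n * conj σ (C σ a) = (conj σ)⁻¹ (C σ (σ a)) * weight σ n := by
  have hσ1 : σ ^ (1 - n : ℤ) = σ := by rw [zpow_sub, zpow_natCast, hσ, zpow_one, inv_one, mul_one]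
  have hslide : (1 - X σ) * weight σ n * (1 - X σ) * C σ a =
      C σ (σ a) * ((1 - X σ) * weight σ n * (1 - X σ)) := by
    rw [one_sub_X_mul_weight_mul_one_sub_X, smul_mul_assoc, mul_smul_comm, mul_assoc,
      ((commute_one_sub_X_pow_C hσ a).pow_left 2).eq, ← mul_assoc, X_zpow_mul_C, hσ1, mul_assoc]
  refine mul_left_cancel₀ one_sub_X_ne_zero (mul_right_cancel₀ one_sub_X_ne_zero ?_)
  rw [mul_assoc, mul_assoc, conj_mul_one_sub_X, ← mul_assoc (1 - X σ) ((conj σ)⁻¹ _),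
    one_sub_X_mul_conj_inv, ← mul_assoc, ← mul_assoc, hslide]
  simp only [mul_assoc]

theorem mul_C_mul_weight (hσ : σ ^ n = 1) {x y z q r : F} (hq : q ∈ fixedSubring σ)
    {t : SkewLaurentSeries σ}
    (ht : t * C σ x = C σ y * C σ q + C σ z * (conj σ)⁻¹ (C σ (σ r))) :
    t * (C σ x * weight σ n) =
      C σ y * weight σ n * C σ q + C σ z * weight σ n * conj σ (C σ r) := by
  rw [← mul_assoc, ht, mul_assoc (C σ y), (commute_weight_C hq).eq, mul_assoc (C σ z),
    weight_mul_conj_C hσ, add_mul, mul_assoc, mul_assoc]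

theorem exists_mul_C_eq_add {v w : F} (hw : w ≠ 0) (hvw : σ (w⁻¹ * v) ≠ w⁻¹ * v) (p q : F) :
    ∃ (t : SkewLaurentSeries σ) (a b : F),
      t * C σ v = C σ v * C σ p + C σ w * (conj σ)⁻¹ (C σ (σ a)) ∧
      t * C σ w = C σ v * C σ q + C σ w * (conj σ)⁻¹ (C σ (σ b)) := by
  have hw' : C σ w ≠ 0 := (map_ne_zero _).2 hw
  set φ := w⁻¹ * v
  have hφ : C σ w * C σ φ = C σ v := by rw [← map_mul, mul_inv_cancel_left₀ hw]
  obtain ⟨a, b, h⟩ := exists_C_eq_conj_inv_add_conj_inv_mul hvw (φ * q * φ - φ * p)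
  obtain ⟨a, rfl⟩ := σ.surjective a
  obtain ⟨b, rfl⟩ := σ.surjective b
  set r := (conj σ)⁻¹ (C σ (σ b))
  have hrem : C σ φ * C σ q * C σ φ =
      (conj σ)⁻¹ (C σ (σ a)) + r * C σ φ + C σ φ * C σ p := by
    rw [← sub_eq_iff_eq_add, ← h, map_sub, map_mul _ (φ * q) φ, map_mul _ φ q, map_mul _ φ p]
  refine ⟨(C σ v * C σ q - C σ w * r) * (C σ w)⁻¹, a, -b, ?_, ?_⟩
  · rw [← hφ, mul_assoc, inv_mul_cancel_left₀ hw', mul_assoc (C σ w), ← mul_sub, mul_assoc,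
      sub_mul, hrem, add_right_comm, add_sub_cancel_right, mul_add, add_comm, mul_assoc]
  · rw [inv_mul_cancel_right₀ hw', map_neg, map_neg, map_neg, mul_neg, sub_eq_add_neg]

theorem conj_inv_C_mul_weight (hσ : σ ^ n = 1) (x : F) :
    (conj σ)⁻¹ (C σ x * weight σ n) = (n : K)⁻¹ • ∑ i ∈ Finset.range n, C σ ((σ ^ i) x) *
      (X σ ^ (i + (1 - n) : ℤ) * ∑ j ∈ Finset.range n, X σ ^ j) := by
  set P := ∑ i ∈ Finset.range n, X σ ^ i with hP
  have hXP : Commute (X σ) P := .sum_right _ _ _ fun i _ ↦ (Commute.refl _).pow_right i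
  have hcomm : Commute (1 - X σ ^ n) (X σ ^ (1 - n : ℤ) * P) :=
    (Commute.one_left _).sub_left
      (((Commute.refl _).zpow_right₀ _).mul_right hXP |>.pow_left n)
  have hexpand : ∑ i ∈ Finset.range n, C σ ((σ ^ i) x) * (X σ ^ (i + (1 - n) : ℤ) * P) =
      P * (C σ x * (X σ ^ (1 - n : ℤ) * P)) := by
    rw [hP, Finset.sum_mul]
    refine Finset.sum_congr rfl fun i _ ↦ ?_
    rw [zpow_add₀ (X_ne_zero σ), ← zpow_natCast (X σ), ← mul_assoc _ (C σ x), X_zpow_mul_C,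
      zpow_natCast σ]
    simp only [mul_assoc]
  refine mul_left_cancel₀ one_sub_X_ne_zero ?_
  calc (1 - X σ) * (conj σ)⁻¹ (C σ x * weight σ n)
      = (n : K)⁻¹ • (C σ x * (X σ ^ (1 - n : ℤ) * P * (P * (1 - X σ)))) := by
        rw [one_sub_X_mul_conj_inv, weight, mul_smul_comm, smul_mul_assoc, sq]
        simp only [mul_assoc]
        rfl
    _ = (n : K)⁻¹ • ((1 - X σ ^ n) * (C σ x * (X σ ^ (1 - n : ℤ) * P))) := by
        rw [geom_sum_mul_neg, ← hcomm.eq, ← mul_assoc (C σ x), ← (commute_one_sub_X_pow_C hσ x).eq,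
          mul_assoc]
    _ = _ := by
        rw [hexpand, mul_smul_comm, ← mul_assoc (1 - X σ), mul_neg_geom_sum]

theorem cyclicTrace_X_zpow_mul_geom_sum (hζ : IsPrimitiveRoot ζ n) {i : ℕ} (hi : i < n) :
    cyclicTrace (scale σ ζ) n (X σ ^ (i + (1 - n) : ℤ) * ∑ j ∈ Finset.range n, X σ ^ j) = n := by
  have hterm (j : ℕ) (hj : j ∈ Finset.range n) :
      cyclicTrace (scale σ ζ) n (X σ ^ (i + (1 - n) : ℤ) * X σ ^ j) =
        if n - 1 - i = j then (n : SkewLaurentSeries σ) else 0 := by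
    rw [Finset.mem_range] at hj
    rw [← zpow_natCast, ← zpow_add₀ (X_ne_zero σ), cyclicTrace_scale_X_zpow hζ (by grind)]
    congr 1
    grind
  rw [Finset.mul_sum, map_sum, Finset.sum_congr rfl hterm, Finset.sum_ite_eq,
    if_pos (Finset.mem_range.2 (by omega))]

theorem cyclicTrace_twist_C_mul_weight [NeZero n] (hσ : σ ^ n = 1) (hζ : IsPrimitiveRoot ζ n)
    (x : F) : cyclicTrace (twist σ ζ) n (C σ x * weight σ n) = C σ (cyclicTrace σ n x) := by
  have hn : (n : K) ≠ 0 := (IsPrimitiveRoot.coe_units_iff.2 hζ).neZero'.out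
  have htrace (i : ℕ) (hi : i ∈ Finset.range n) :
      cyclicTrace (scale σ ζ) n (C σ ((σ ^ i) x) *
        (X σ ^ (i + (1 - n) : ℤ) * ∑ j ∈ Finset.range n, X σ ^ j)) =
      (n : K) • C σ ((σ ^ i) x) := by
    rw [cyclicTrace_mul_left (mem_fixedSubring.2 (scale_C ζ _)),
      cyclicTrace_X_zpow_mul_geom_sum hζ (Finset.mem_range.1 hi), Nat.cast_smul_eq_nsmul,
      nsmul_eq_mul']
  rw [twist, cyclicTrace_conj, conj_inv_C_mul_weight hσ, map_smul, map_sum,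
    Finset.sum_congr rfl htrace, ← Finset.smul_sum, inv_smul_smul₀ hn, ← map_sum,
    ← cyclicTrace_apply, conj_C_of_mem_fixedSubring (cyclicTrace_mem_fixedSubring hσ x)]

end SkewLaurentSeries

namespace CyclicStage

open SkewLaurentSeries

variable {K : Type*} [Field K] {n : ℕ} [NeZero n] {ζ : Kˣ}

/-- The stage on skew Laurent series over `s.F`, whose fixed subring contains a copy of `s.F`
conjugated by `1 - X`. -/
noncomputable def next (hζ : IsPrimitiveRoot ζ n) (s : CyclicStage K n) : CyclicStage K n where
  F := SkewLaurentSeries s.σ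
  σ := twist s.σ ζ
  gen := C s.σ s.gen
  dual l := C s.σ (s.dual l) * weight s.σ n
  pow_eq_one := twist_pow_eq_one hζ.pow_eq_one
  cyclicTrace_pow_mul_dual i hi l hl := by
    rw [← mul_assoc, ← map_pow, ← map_mul, cyclicTrace_twist_C_mul_weight s.pow_eq_one hζ,
      s.cyclicTrace_pow_mul_dual i hi l hl, apply_ite (C s.σ), map_one, map_zero]

/-- The stage on Laurent series over `K`, generated by the variable. -/
noncomputable def laurent (hζ : IsPrimitiveRoot ζ n) : CyclicStage K n where
  F := SkewLaurentSeries (1 : K ≃ₐ[K] K)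
  σ := scale 1 ζ
  gen := X 1
  dual l := (n : K)⁻¹ • X 1 ^ (-l : ℤ)
  pow_eq_one := by rw [← map_pow, hζ.pow_eq_one, map_one]
  cyclicTrace_pow_mul_dual i hi l hl := by
    have hn : (n : K) ≠ 0 := (IsPrimitiveRoot.coe_units_iff.2 hζ).neZero'.out
    rw [mul_smul_comm, map_smul, ← zpow_natCast, ← zpow_add₀ (X_ne_zero _),
      cyclicTrace_scale_X_zpow hζ (by grind), smul_ite, smul_zero,
      ← map_natCast (algebraMap K (SkewLaurentSeries 1)), Algebra.algebraMap_eq_smul_one,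
      inv_smul_smul₀ hn]
    simp only [← sub_eq_add_neg, sub_eq_zero, Nat.cast_inj]

/-- The inclusion of the constant series. -/
noncomputable def toNext (hζ : IsPrimitiveRoot ζ n) (s : CyclicStage K n) :
    s.F →+* (s.next hζ).F :=
  (C s.σ : s.F →+* SkewLaurentSeries s.σ)

theorem toNext_gen (hζ : IsPrimitiveRoot ζ n) (s : CyclicStage K n) :
    s.toNext hζ s.gen = (s.next hζ).gen :=
  rfl

theorem toNext_mem_fixedSubring (hζ : IsPrimitiveRoot ζ n) (s : CyclicStage K n) {g : s.F}
    (hg : g ∈ fixedSubring s.σ) : s.toNext hζ g ∈ fixedSubring (s.next hζ).σ :=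
  C_mem_fixedSubring hg

theorem coord_toNext (hζ : IsPrimitiveRoot ζ n) (s : CyclicStage K n) (l : ℕ) (x : s.F) :
    (s.next hζ).coord l (s.toNext hζ x) = s.toNext hζ (s.coord l x) := by
  refine Eq.trans (b := cyclicTrace (twist s.σ ζ) n (C s.σ x * (C s.σ (s.dual l) * weight s.σ n)))
    rfl ?_
  rw [← mul_assoc, ← map_mul, cyclicTrace_twist_C_mul_weight s.pow_eq_one hζ]
  rfl

theorem exists_toNext_eq_add_gen_mul (hζ : IsPrimitiveRoot ζ n) (hn : 2 ≤ n) (s : CyclicStage K n)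
    (x : s.F) : ∃ a ∈ fixedSubring (s.next hζ).σ, ∃ b ∈ fixedSubring (s.next hζ).σ,
      s.toNext hζ x = a + (s.next hζ).gen * b := by
  obtain ⟨a, b, h⟩ := exists_C_eq_conj_add_mul_conj (s.σ_gen_ne hn) x
  exact ⟨_, conj_C_mem_fixedSubring a, _, conj_C_mem_fixedSubring b, h⟩

theorem exists_mul_dual_next_eq (hζ : IsPrimitiveRoot ζ n) (s : CyclicStage K n) {i l : ℕ}
    (hi : i < n) (hl : l < n) (hil : i ≠ l) {p q : s.F} (hp : p ∈ fixedSubring s.σ)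
    (hq : q ∈ fixedSubring s.σ) :
    ∃ t, ∃ a ∈ fixedSubring (s.next hζ).σ, ∃ b ∈ fixedSubring (s.next hζ).σ,
      t * (s.next hζ).dual i = (s.next hζ).dual i * s.toNext hζ p + (s.next hζ).dual l * a ∧
      t * (s.next hζ).dual l = (s.next hζ).dual i * s.toNext hζ q + (s.next hζ).dual l * b := by
  obtain ⟨t, a, b, ha, hb⟩ := exists_mul_C_eq_add (s.dual_ne_zero hl)
    (s.σ_inv_dual_mul_dual_ne hl hi hil.symm) p q
  exact ⟨t, _, conj_C_mem_fixedSubring a, _, conj_C_mem_fixedSubring b,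
    mul_C_mul_weight s.pow_eq_one hp ha, mul_C_mul_weight s.pow_eq_one hq hb⟩

theorem exists_isLeftQuotient_toNext (hζ : IsPrimitiveRoot ζ n) (s : CyclicStage K n) {k : ℕ}
    (hk : n = k + 3) (d : s.F) :
    ∃ t, IsLeftQuotient (fixedSubring (s.next hζ).σ) (s.next hζ).gen k (s.toNext hζ d) t := by
  set q := fun l ↦ s.coord l (s.gen ^ k * d)
  have hq (l : ℕ) : s.toNext hζ (q l) ∈ fixedSubring (s.next hζ).σ :=
    s.toNext_mem_fixedSubring hζ (s.coord_mem _ _)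
  obtain ⟨t, a, ha, b, hb, hta, htb⟩ := s.exists_mul_dual_next_eq hζ (i := k + 1) (l := k + 2)
    (by omega) (by omega) (by omega) (s.coord_mem (k + 1) (s.gen ^ k * d))
    (s.coord_mem (k + 2) (s.gen ^ k * d))
  have ht (l : ℕ) (hkl : k < l) (hl : l < n) : ∃ g ∈ fixedSubring (s.next hζ).σ,
      t * (s.next hζ).dual l =
        (s.next hζ).dual (k + 1) * s.toNext hζ (q l) + (s.next hζ).dual (k + 2) * g := by
    obtain rfl | rfl : l = k + 1 ∨ l = k + 2 := by omega
    exacts [⟨a, ha, hta⟩, ⟨b, hb, htb⟩]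
  refine ⟨t, (s.next hζ).isLeftQuotient_of_coord (by omega) fun l hkl hl i hi ↦ ?_⟩
  obtain ⟨g, hg, htg⟩ := ht l hkl hl
  rw [coord_mul, htg, mul_add, map_add, cyclicTrace_pow_mul_dual_mul _ (hq l) (by omega) (by omega),
    cyclicTrace_pow_mul_dual_mul _ hg (by omega) (by omega), if_neg (by omega : i ≠ k + 2),
    add_zero, ← toNext_gen, ← map_pow, ← map_mul, coord_toNext]

end CyclicStage

section ChainLimit

universe u

variable {A : ℕ → Type u} [∀ m, DivisionRing (A m)] (p : ∀ m, A m →+* A (m + 1))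

/-- The composite `A m → A (m + 1) → ⋯ → A k` of the maps of a chain. -/
def chainMap (m k : ℕ) (h : m ≤ k) : A m →+* A k :=
  Nat.leRec (motive := fun k _ ↦ A m →+* A k) (RingHom.id _) (fun k _ g ↦ (p k).comp g) h

theorem chainMap_self (m : ℕ) : chainMap p m m le_rfl = RingHom.id _ :=
  Nat.leRec_self _ _

theorem chainMap_succ {m k : ℕ} (h : m ≤ k) :
    chainMap p m (k + 1) (h.trans k.le_succ) = (p k).comp (chainMap p m k h) :=
  Nat.leRec_succ _ _ _

instance : DirectedSystem A (fun m k h ↦ chainMap p m k h) where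
  map_self m x := by rw [chainMap_self, RingHom.id_apply]
  map_map k j i hij hjk x := by
    induction k, hjk using Nat.le_induction with
    | base => rw [chainMap_self, RingHom.id_apply]
    | succ k hk ih =>
      rw [chainMap_succ p hk, chainMap_succ p (hij.trans hk), RingHom.comp_apply,
        RingHom.comp_apply, ih]

/-- The map from a member of the chain to the direct limit. -/
def toChainLimit (m : ℕ) : A m →+* DirectLimit A (chainMap p) where
  toFun x := ⟦⟨m, x⟩⟧
  map_one' := (DirectLimit.one_def m).symm
  map_zero' := (DirectLimit.zero_def m).symm
  map_mul' x y := (DirectLimit.mul_def m x y).symm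
  map_add' x y := (DirectLimit.add_def m x y).symm

theorem toChainLimit_succ (m : ℕ) (x : A m) :
    toChainLimit p (m + 1) (p m x) = toChainLimit p m x := by
  have h := DirectLimit.mk_apply (f := chainMap p) m (m + 1) x m.le_succ
  rwa [chainMap_succ p le_rfl, chainMap_self] at h

theorem exists_toChainLimit_eq (x : DirectLimit A (chainMap p)) :
    ∃ m a, toChainLimit p m a = x := by
  obtain ⟨m, a, rfl⟩ := DirectLimit.exists_eq_mk _ x
  exact ⟨m, a, rfl⟩

end ChainLimit

namespace CyclicStage

universe u

variable {K : Type*} [Field K] {n : ℕ} [NeZero n] {ζ : Kˣ}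

/-- The iterates of `next` on the stage `s`. -/
noncomputable def tower (hζ : IsPrimitiveRoot ζ n) (s : CyclicStage.{_, u} K n) :
    ℕ → CyclicStage K n
  | 0 => s
  | m + 1 => (tower hζ s m).next hζ

/-- The inclusion of a stage of the tower in the next one. -/
noncomputable def towerMap (hζ : IsPrimitiveRoot ζ n) (s : CyclicStage K n) (m : ℕ) :
    (s.tower hζ m).F →+* (s.tower hζ (m + 1)).F :=
  (s.tower hζ m).toNext hζ

/-- The union of the tower of stages above `s`. -/
abbrev Limit (hζ : IsPrimitiveRoot ζ n) (s : CyclicStage.{_, u} K n) : Type u :=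
  DirectLimit (fun m ↦ (s.tower hζ m).F) (chainMap (s.towerMap hζ))

/-- The inclusion of a stage of the tower in the union. -/
noncomputable def toLimit (hζ : IsPrimitiveRoot ζ n) (s : CyclicStage K n) (m : ℕ) :
    (s.tower hζ m).F →+* s.Limit hζ :=
  toChainLimit (s.towerMap hζ) m

/-- The union of the fixed subrings of the stages. -/
noncomputable def limitFixed (hζ : IsPrimitiveRoot ζ n) (s : CyclicStage K n) :
    Subring (s.Limit hζ) :=
  ⨆ m, (fixedSubring (s.tower hζ m).σ).map (s.toLimit hζ m)

/-- The common image of the elements `gen` of all stages. -/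
noncomputable def limitGen (hζ : IsPrimitiveRoot ζ n) (s : CyclicStage K n) : s.Limit hζ :=
  s.toLimit hζ 0 s.gen

variable (hζ : IsPrimitiveRoot ζ n) (s : CyclicStage K n)

theorem toLimit_towerMap (m : ℕ) (x : (s.tower hζ m).F) :
    s.toLimit hζ (m + 1) (s.towerMap hζ m x) = s.toLimit hζ m x :=
  toChainLimit_succ (s.towerMap hζ) m x

theorem exists_toLimit_eq (x : s.Limit hζ) : ∃ m a, s.toLimit hζ m a = x :=
  exists_toChainLimit_eq _ x

theorem toLimit_gen (m : ℕ) : s.toLimit hζ m (s.tower hζ m).gen = s.limitGen hζ := by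
  induction m with
  | zero => rfl
  | succ m ih => exact (s.toLimit_towerMap hζ m _).trans ih

theorem map_fixedSubring_le_limitFixed (m : ℕ) :
    (fixedSubring (s.tower hζ m).σ).map (s.toLimit hζ m) ≤ s.limitFixed hζ :=
  le_iSup (fun m ↦ (fixedSubring (s.tower hζ m).σ).map (s.toLimit hζ m)) m

theorem toLimit_mem_limitFixed {m : ℕ} {g : (s.tower hζ m).F}
    (hg : g ∈ fixedSubring (s.tower hζ m).σ) : s.toLimit hζ m g ∈ s.limitFixed hζ :=
  s.map_fixedSubring_le_limitFixed hζ m ⟨g, hg, rfl⟩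

theorem monotone_map_fixedSubring :
    Monotone fun m ↦ (fixedSubring (s.tower hζ m).σ).map (s.toLimit hζ m) :=
  monotone_nat_of_le_succ fun m ↦ by
    rintro _ ⟨g, hg, rfl⟩
    exact ⟨s.towerMap hζ m g, (s.tower hζ m).toNext_mem_fixedSubring hζ hg,
      s.toLimit_towerMap hζ m g⟩

theorem exists_mem_map_fixedSubring {x : s.Limit hζ} (hx : x ∈ s.limitFixed hζ) :
    ∃ m, x ∈ (fixedSubring (s.tower hζ m).σ).map (s.toLimit hζ m) :=
  (Subring.mem_iSup_of_directed (s.monotone_map_fixedSubring hζ).directed_le).1 hx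

theorem inv_mem_limitFixed {x : s.Limit hζ} (hx : x ∈ s.limitFixed hζ) :
    x⁻¹ ∈ s.limitFixed hζ := by
  obtain ⟨m, g, hg, rfl⟩ := s.exists_mem_map_fixedSubring hζ hx
  rw [← map_inv₀]
  exact s.toLimit_mem_limitFixed hζ (inv_mem_fixedSubring hg)

theorem exists_lift_of_mem_limitFixed {c : ℕ → s.Limit hζ} (hc : ∀ i, c i ∈ s.limitFixed hζ)
    (N : ℕ) : ∃ m, ∃ g : ℕ → (s.tower hζ m).F, (∀ i, g i ∈ fixedSubring (s.tower hζ m).σ) ∧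
      ∀ i < N, s.toLimit hζ m (g i) = c i := by
  choose m hm using fun i ↦ s.exists_mem_map_fixedSubring hζ (hc i)
  have hlift (i : ℕ) : ∃ g ∈ fixedSubring (s.tower hζ ((Finset.range N).sup m)).σ,
      i < N → s.toLimit hζ _ g = c i := by
    by_cases hi : i < N
    · obtain ⟨g, hg, h⟩ := s.monotone_map_fixedSubring hζ
        (Finset.le_sup (f := m) (Finset.mem_range.2 hi)) (hm i)
      exact ⟨g, hg, fun _ ↦ h⟩
    · exact ⟨0, zero_mem _, fun h ↦ (hi h).elim⟩
  choose g hg hgc using hlift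
  exact ⟨_, g, hg, hgc⟩

theorem exists_eq_sum_mul_limitGen_pow (x : s.Limit hζ) : ∃ c : ℕ → s.Limit hζ,
    (∀ i, c i ∈ s.limitFixed hζ) ∧ x = ∑ i ∈ Finset.range n, c i * s.limitGen hζ ^ i := by
  obtain ⟨m, x, rfl⟩ := s.exists_toLimit_eq hζ x
  refine ⟨fun l ↦ s.toLimit hζ m ((s.tower hζ m).coord l x),
    fun l ↦ s.toLimit_mem_limitFixed hζ ((s.tower hζ m).coord_mem l x), ?_⟩
  conv_lhs => rw [← (s.tower hζ m).sum_coord_mul_pow x]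
  simp only [map_sum, map_mul, map_pow, toLimit_gen]

theorem eq_zero_of_sum_mul_limitGen_pow_eq_zero {c : ℕ → s.Limit hζ}
    (hc : ∀ i, c i ∈ s.limitFixed hζ)
    (h : ∑ i ∈ Finset.range n, c i * s.limitGen hζ ^ i = 0) {l : ℕ} (hl : l < n) : c l = 0 := by
  obtain ⟨m, g, hg, hgc⟩ := s.exists_lift_of_mem_limitFixed hζ hc n
  have hsum : ∑ i ∈ Finset.range n, g i * (s.tower hζ m).gen ^ i = 0 := by
    refine (map_eq_zero (s.toLimit hζ m)).1 (Eq.trans ?_ h)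
    rw [map_sum]
    refine Finset.sum_congr rfl fun i hi ↦ ?_
    rw [map_mul, map_pow, toLimit_gen, hgc i (Finset.mem_range.1 hi)]
  rw [← hgc l hl, ← (s.tower hζ m).coord_sum hg hl, hsum, map_zero, map_zero]

theorem exists_eq_add_limitGen_mul (hn : 2 ≤ n) (x : s.Limit hζ) :
    ∃ a ∈ s.limitFixed hζ, ∃ b ∈ s.limitFixed hζ, x = a + s.limitGen hζ * b := by
  obtain ⟨m, x, rfl⟩ := s.exists_toLimit_eq hζ x
  obtain ⟨a, ha, b, hb, h⟩ : ∃ a ∈ fixedSubring (s.tower hζ (m + 1)).σ,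
      ∃ b ∈ fixedSubring (s.tower hζ (m + 1)).σ,
        s.towerMap hζ m x = a + (s.tower hζ (m + 1)).gen * b :=
    (s.tower hζ m).exists_toNext_eq_add_gen_mul hζ hn x
  refine ⟨_, s.toLimit_mem_limitFixed hζ ha, _, s.toLimit_mem_limitFixed hζ hb, ?_⟩
  rw [← toLimit_towerMap, h, map_add, map_mul, toLimit_gen]

theorem exists_isLeftQuotient_limit {k : ℕ} (hk : k + 1 < n) (hkn : n ≤ k + 3)
    (d : s.Limit hζ) : ∃ t, IsLeftQuotient (s.limitFixed hζ) (s.limitGen hζ) k d t := by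
  obtain ⟨m, d, rfl⟩ := s.exists_toLimit_eq hζ d
  obtain hk | hk : n = k + 2 ∨ n = k + 3 := by omega
  · obtain ⟨t, ht⟩ := (s.tower hζ m).exists_isLeftQuotient hk d
    rw [← s.toLimit_gen hζ m]
    exact ⟨_, ht.map _ (s.map_fixedSubring_le_limitFixed hζ m)⟩
  · obtain ⟨t, ht⟩ : ∃ t, IsLeftQuotient (fixedSubring (s.tower hζ (m + 1)).σ)
        (s.tower hζ (m + 1)).gen k (s.towerMap hζ m d) t :=
      (s.tower hζ m).exists_isLeftQuotient_toNext hζ hk d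
    rw [← s.toLimit_gen hζ (m + 1), ← s.toLimit_towerMap hζ m]
    exact ⟨_, ht.map _ (s.map_fixedSubring_le_limitFixed hζ (m + 1))⟩

theorem limitGen_notMem_Sset {k : ℕ} (hk : k + 1 < n) :
    s.limitGen hζ ∉ Sset (s.limitFixed hζ) (s.limitGen hζ ^ ·) k := fun h ↦ by
  obtain ⟨c, hc, hsum⟩ := mem_Sset_iff.1 h k le_rfl
  have hc' (i : ℕ) : ((if i < k + 1 then c i else 0) - if i = k + 1 then 1 else 0) ∈
      s.limitFixed hζ := by
    refine sub_mem ?_ ?_ <;> split_ifs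
    exacts [hc i, zero_mem _, one_mem _, zero_mem _]
  have hzero := s.eq_zero_of_sum_mul_limitGen_pow_eq_zero hζ hc' ?_ hk
  · simp at hzero
  · rw [← pow_succ] at hsum
    simp only [sub_mul, ite_mul, one_mul, zero_mul, Finset.sum_sub_distrib, Finset.sum_ite_eq',
      Finset.mem_range, if_pos hk]
    rw [← Finset.sum_filter, hsum, sub_eq_zero]
    congr 1
    grind

end CyclicStage

theorem stmt8_general {n : ℕ} (hn : 2 ≤ n) :
    ∃ E : DivExtData,
      (∀ x : E.F, ∃ c : ℕ → E.F, (∀ i, c i ∈ E.G) ∧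
        x = ∑ i ∈ Finset.range n, c i * E.f i) ∧
      (∀ c : ℕ → E.F, (∀ i, c i ∈ E.G) →
        ∑ i ∈ Finset.range n, c i * E.f i = 0 → ∀ i < n, c i = 0) ∧
      (∀ x : E.F, ∃ a ∈ E.G, ∃ b ∈ E.G, x = a + E.f 1 * b) ∧
      (∀ k : ℕ, 1 ≤ k → k + 1 < n → n ≤ k + 3 → ∃ e ∈ Dset E.G E.f k, e ∉ Sset E.G E.f k ∧
        ∀ d ∈ Dset E.G E.f k, ∃ s ∈ Sset E.G E.f k, ∃ t ∈ Sset E.G E.f k, d = s + e * t) := by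
  have : NeZero n := ⟨by omega⟩
  obtain ⟨ζ, hζ⟩ : ∃ ζ : ℂˣ, IsPrimitiveRoot ζ n :=
    have h := Complex.isPrimitiveRoot_exp n (NeZero.ne n)
    ⟨_, h.isUnit_unit (NeZero.ne n)⟩
  let s := CyclicStage.laurent hζ
  refine ⟨⟨s.Limit hζ, s.limitFixed hζ, fun _ ↦ s.inv_mem_limitFixed hζ, (s.limitGen hζ ^ ·),
    pow_zero _⟩, s.exists_eq_sum_mul_limitGen_pow hζ,
    fun c hc h i ↦ s.eq_zero_of_sum_mul_limitGen_pow_eq_zero hζ hc h,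
    fun x ↦ by simpa using s.exists_eq_add_limitGen_mul hζ hn x, fun k hk hkn hnk ↦ ?_⟩
  obtain ⟨k, rfl⟩ := Nat.exists_eq_succ_of_ne_zero (by omega : k ≠ 0)
  refine ⟨s.limitGen hζ, mem_Dset_pow_succ _ k, s.limitGen_notMem_Sset hζ hkn,
    fun d hd ↦ ?_⟩
  obtain ⟨t, ht⟩ := s.exists_isLeftQuotient_limit hζ hkn hnk d
  exact ht.exists_eq_add_mul hd

/-- There is a division ring extension `G ⊆ F` with a left `G`-basis `f_0 = 1, f_1, f_2, f_3`
of `F` such that every `x ∈ F` has the form `a + f_1·b` with `a, b ∈ G`, and for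
`k ∈ {1, 2}` there is `e ∈ D_k \ S_k` with `D_k = S_k + e·S_k` (i.e. the right dimension
sequence of `F` is `(1,2,2,2,1,4)`; the associated triangular ring has Coxeter type `I₂(6)`). -/
theorem stmt8 :
    ∃ E : DivExtData,
      (∀ x : E.F, ∃ c : ℕ → E.F, (∀ i, c i ∈ E.G) ∧
        x = ∑ i ∈ Finset.range 4, c i * E.f i) ∧
      (∀ c : ℕ → E.F, (∀ i, c i ∈ E.G) →
        ∑ i ∈ Finset.range 4, c i * E.f i = 0 → ∀ i < 4, c i = 0) ∧
      (∀ x : E.F, ∃ a ∈ E.G, ∃ b ∈ E.G, x = a + E.f 1 * b) ∧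
      (∀ k : ℕ, k = 1 ∨ k = 2 → ∃ e ∈ Dset E.G E.f k, e ∉ Sset E.G E.f k ∧
        ∀ d ∈ Dset E.G E.f k, ∃ s ∈ Sset E.G E.f k, ∃ t ∈ Sset E.G E.f k,
          d = s + e * t) := by
  obtain ⟨E, hspan, hindep, hright, hquot⟩ := stmt8_general (n := 4) (by norm_num)
  exact ⟨E, hspan, hindep, hright, fun k hk ↦ hquot k (by omega) (by omega) (by omega)⟩
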